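/- arXiv:2307.08400 — 3 statements merged into one kernel-verified Lean document; each statement's English description precedes it below -/
import Mathlib

section
/- Let X be a δ-hyperbolic geodesic metric space and let S be a finite nonempty set of isometries of X with λ(S, X) ≥ 30δ. Then the set S^{≤2} = S ∪ S·S contains a loxodromic isometry b with the following property: there is a constant c₀ > 0 depending only on δ such that for every point o ∈ X with |λ(S,o) − λ(S,X)| < δ one has d(o, b·o) ≥ λ(S, X) − 10δ, and the bi-infinite concatenation α = ⋃_{n∈ℤ} bⁿ[o, b·o] of translates of a geodesic [o, b·o] is a c₀-quasi-geodesic (hence a quasi-axis for b). -/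
open Pointwise

/-- A geodesic from `a` to `b`, parametrized by arc length on `[0, dist a b]`. -/
def IsGeodesicSeg {X : Type*} [MetricSpace X] (γ : ℝ → X) (a b : X) : Prop :=
  γ 0 = a ∧ γ (dist a b) = b ∧
    ∀ s ∈ Set.Icc (0 : ℝ) (dist a b), ∀ t ∈ Set.Icc (0 : ℝ) (dist a b),
      dist (γ s) (γ t) = |s - t|

/-- A geodesic metric space: any two points are joined by a geodesic segment. -/
def GeodesicMetricSpace (X : Type*) [MetricSpace X] : Prop :=
  ∀ a b : X, ∃ γ : ℝ → X, IsGeodesicSeg γ a b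

/-- `δ`-hyperbolicity via thin triangles: every side of a geodesic triangle is in the
`δ`-neighbourhood of the union of the other two sides. -/
def DeltaHyperbolic (X : Type*) [MetricSpace X] (δ : ℝ) : Prop :=
  ∀ a b c : X, ∀ γ₁ γ₂ γ₃ : ℝ → X,
    IsGeodesicSeg γ₁ a b → IsGeodesicSeg γ₂ b c → IsGeodesicSeg γ₃ c a →
    ∀ t ∈ Set.Icc (0 : ℝ) (dist a b),
      (∃ u ∈ Set.Icc (0 : ℝ) (dist b c), dist (γ₁ t) (γ₂ u) ≤ δ) ∨
      (∃ u ∈ Set.Icc (0 : ℝ) (dist c a), dist (γ₁ t) (γ₃ u) ≤ δ)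

/-- Displacement `λ(S,x) = max_{s ∈ S} d(x, s·x)` of a finite set of isometries at `x`. -/
noncomputable def idispAt {X : Type*} [MetricSpace X] (S : Finset (X ≃ᵢ X)) (x : X) : ℝ :=
  sSup ((fun s : X ≃ᵢ X => dist x (s x)) '' (S : Set (X ≃ᵢ X)))

/-- Displacement `λ(S,X) = inf_{x ∈ X} λ(S,x)` of a finite set of isometries on `X`. -/
noncomputable def idispSpace {X : Type*} [MetricSpace X] (S : Finset (X ≃ᵢ X)) : ℝ :=
  sInf (Set.range fun x : X => idispAt S x)

/-- An isometry is loxodromic if its stable translation length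
`τ(b) = lim_n d(x, bⁿ·x)/n` is strictly positive. -/
def Loxodromic {X : Type*} [MetricSpace X] (b : X ≃ᵢ X) : Prop :=
  ∃ (x : X) (τ : ℝ), 0 < τ ∧
    Filter.Tendsto (fun n : ℕ => dist x ((b ^ n) x) / n) Filter.atTop (nhds τ)

/-- The bi-infinite concatenation `α = ⋃_{n ∈ ℤ} bⁿ[o, b·o]` of the `b`-translates of a
geodesic `γ` from `o` to `b·o`, parametrized by arc length. -/
noncomputable def axisPath {X : Type*} [MetricSpace X] (b : X ≃ᵢ X) (o : X) (γ : ℝ → X)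
    (t : ℝ) : X :=
  (b ^ ⌊t / dist o (b o)⌋)
    (γ (t - (⌊t / dist o (b o)⌋ : ℝ) * dist o (b o)))

/-- A path `α : ℝ → X` parametrized by arc length is a `c`-quasi-geodesic: the length
`|s - t|` of any subpath is at most `c · d(α s, α t) + c`. -/
def IsQuasiGeodesicParam {X : Type*} [MetricSpace X] (c : ℝ) (α : ℝ → X) : Prop :=
  ∀ s t : ℝ, |s - t| ≤ c * dist (α s) (α t) + c ∧ dist (α s) (α t) ≤ |s - t|

lemma star_aux {X : Type*} [MetricSpace X] {δ : ℝ} (hg : GeodesicMetricSpace X)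
    (hh : DeltaHyperbolic X δ) (x y : X) (r : ℝ) (h0 : 0 ≤ r) (h1 : r ≤ dist x y) :
    ∃ p : X, dist x p = r ∧ dist p y = dist x y - r ∧
      ∀ q : X, dist q p ≤ dist q x - r + 2 * δ ∨
        dist q p ≤ dist q y - (dist x y - r) + 2 * δ := by
  obtain ⟨γ, hγ⟩ := hg x y
  have hγ' := hγ
  obtain ⟨g0, g1, gd⟩ := hγ'
  have e1 : dist x (γ r) = r := by
    have := gd 0 ⟨le_refl _, dist_nonneg⟩ r ⟨h0, h1⟩
    rw [g0] at this
    rw [this, zero_sub, abs_neg, abs_of_nonneg h0]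
  have e2 : dist (γ r) y = dist x y - r := by
    have := gd r ⟨h0, h1⟩ (dist x y) ⟨dist_nonneg, le_refl _⟩
    rw [g1] at this
    rw [this, abs_sub_comm, abs_of_nonneg (by linarith)]
  refine ⟨γ r, e1, e2, fun q => ?_⟩
  obtain ⟨γ2, hγ2⟩ := hg y q
  obtain ⟨γ3, hγ3⟩ := hg q x
  rcases hh x y q γ γ2 γ3 hγ hγ2 hγ3 r ⟨h0, h1⟩ with ⟨u, hu, hd⟩ | ⟨u, hu, hd⟩
  · right
    obtain ⟨k0, k1, kd⟩ := hγ2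
    have a1 := kd 0 ⟨le_refl _, dist_nonneg⟩ u hu
    have a2 := kd u hu (dist y q) ⟨dist_nonneg, le_refl _⟩
    rw [k0, zero_sub, abs_neg, abs_of_nonneg hu.1] at a1
    rw [k1, abs_sub_comm, abs_of_nonneg (by linarith [hu.2])] at a2
    have b1 := dist_triangle q (γ2 u) (γ r)
    have b2 := dist_triangle (γ r) (γ2 u) y
    rw [dist_comm q (γ2 u), dist_comm (γ2 u) (γ r)] at b1
    rw [dist_comm (γ2 u) y] at b2
    rw [dist_comm q y]
    linarith
  · left
    obtain ⟨k0, k1, kd⟩ := hγ3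
    have a1 := kd 0 ⟨le_refl _, dist_nonneg⟩ u hu
    have a2 := kd u hu (dist q x) ⟨dist_nonneg, le_refl _⟩
    rw [k0, zero_sub, abs_neg, abs_of_nonneg hu.1] at a1
    rw [k1, abs_sub_comm, abs_of_nonneg (by linarith [hu.2])] at a2
    have b1 := dist_triangle q (γ3 u) (γ r)
    have b2 := dist_triangle x (γ3 u) (γ r)
    rw [dist_comm (γ3 u) (γ r)] at b1 b2
    rw [dist_comm x (γ3 u)] at b2
    linarith

lemma four_aux {X : Type*} [MetricSpace X] {δ : ℝ} (hg : GeodesicMetricSpace X)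
    (hh : DeltaHyperbolic X δ) (x y z w : X) :
    dist x z + dist y w ≤ dist x y + dist z w + 4 * δ ∨
    dist x z + dist y w ≤ dist y z + dist x w + 4 * δ := by
  have t1 := dist_triangle y x z
  have t2 := dist_triangle x y z
  have t3 := dist_triangle x z y
  rw [dist_comm y x] at t1
  rw [dist_comm z y] at t3
  obtain ⟨p, p1, p2, hp⟩ := star_aux hg hh x z ((dist x y + dist x z - dist y z) / 2)
    (by linarith) (by linarith)
  have tt := dist_triangle y p w
  rw [dist_comm p w] at tt
  rw [dist_comm z w, dist_comm x w]
  rcases hp y with h | h <;> rcases hp w with h' | h' <;> (try rw [dist_comm y x] at h) <;>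
    first
    | (left; linarith)
    | (right; linarith)

lemma chain_aux {X : Type*} [MetricSpace X] {δ : ℝ} (hg : GeodesicMetricSpace X)
    (hh : DeltaHyperbolic X δ) (s t : X ≃ᵢ X) (x : X) (l m d e : ℝ)
    (hl : dist x (s x) = l) (hm : dist x (t x) = m) (hd : dist x (s (t x)) = d)
    (he : dist x (t (s x)) = e) (h1 : 2 * l + 8 * δ < d + e) (h2 : 2 * m + 8 * δ < d + e)
    (hδ : 0 < δ) (k : ℕ) :
    k * (d + e - l - m - 8 * δ) ≤ dist x (((s * t) ^ k) x) := by
  have key : ∀ k : ℕ, k * (d + e - l - m - 8 * δ) ≤ dist x (((s * t) ^ k) x) ∧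
      dist x (((s * t) ^ k) x) + (e - m - 4 * δ) ≤ dist x (((s * t) ^ k) (s x)) := by
    intro k
    induction k with
    | zero =>
      simp only [Nat.cast_zero, zero_mul, pow_zero, IsometryEquiv.coe_one, id, dist_self]
      refine ⟨le_refl _, ?_⟩
      have := dist_triangle x (t x) (t (s x))
      rw [t.isometry.dist_eq] at this
      linarith
    | succ k ih =>
      obtain ⟨i1, i2⟩ := ih
      set g := (s * t) ^ k with hgdef
      have hs : ∀ v, ((s * t) ^ (k + 1)) v = g (s (t v)) := by
        intro v; rw [pow_succ]; rfl
      rw [hs, hs]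
      have f1 := four_aux hg hh x (g x) (g (s x)) (g (s (t x)))
      have q1 : dist (g x) (g (s (t x))) = d := by rw [g.isometry.dist_eq, hd]
      have q2 : dist (g (s x)) (g (s (t x))) = m := by
        rw [g.isometry.dist_eq, s.isometry.dist_eq, hm]
      have q3 : dist (g x) (g (s x)) = l := by rw [g.isometry.dist_eq, hl]
      rw [q1, q2, q3] at f1
      have c1 : dist x (g (s x)) + (d - l - 4 * δ) ≤ dist x (g (s (t x))) := by
        rcases f1 with f1 | f1 <;> linarith
      have f2 := four_aux hg hh x (g (s x)) (g (s (t x))) (g (s (t (s x))))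
      have r1 : dist (g (s x)) (g (s (t (s x)))) = e := by
        rw [g.isometry.dist_eq, s.isometry.dist_eq, he]
      have r2 : dist (g (s (t x))) (g (s (t (s x)))) = l := by
        rw [g.isometry.dist_eq, s.isometry.dist_eq, t.isometry.dist_eq, hl]
      rw [r1, r2, q2] at f2
      push_cast
      constructor
      · linarith
      · rcases f2 with f2 | f2 <;> linarith
  exact (key k).1

lemma pow_dist_le_aux {X : Type*} [MetricSpace X] (b : X ≃ᵢ X) (y : X) (n : ℕ) :
    dist y ((b ^ n) y) ≤ n * dist y (b y) := by
  induction n with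
  | zero => simp
  | succ n ih =>
    have := dist_triangle y ((b ^ n) y) ((b ^ (n + 1)) y)
    have h2 : dist ((b ^ n) y) ((b ^ (n + 1)) y) = dist y (b y) := by
      rw [pow_succ]
      exact (b ^ n).isometry.dist_eq _ _
    push_cast
    linarith

lemma tau_aux {X : Type*} [MetricSpace X] (b : X ≃ᵢ X) (x : X) (T : ℝ)
    (h : ∀ n : ℕ, n * T ≤ dist x ((b ^ n) x)) (y : X) (n : ℕ) :
    n * T ≤ dist y ((b ^ n) y) := by
  by_contra hc
  push Not at hc
  obtain ⟨k, hk⟩ := exists_nat_gt (2 * dist x y / (n * T - dist y ((b ^ n) y)))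
  rw [div_lt_iff₀ (by linarith)] at hk
  have h1 := h (n * k)
  have h2 := pow_dist_le_aux (b ^ n) y k
  rw [← pow_mul] at h2
  have h3 := dist_triangle4 x y ((b ^ (n * k)) y) ((b ^ (n * k)) x)
  rw [(b ^ (n * k)).isometry.dist_eq, dist_comm y x] at h3
  push_cast at h1
  nlinarith

lemma lox_aux {X : Type*} [MetricSpace X] (b : X ≃ᵢ X) (x : X) (T : ℝ) (hT : 0 < T)
    (h : ∀ n : ℕ, n * T ≤ dist x ((b ^ n) x)) : Loxodromic b := by
  have hs : Subadditive (fun n : ℕ => dist x ((b ^ n) x)) := by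
    intro m n
    have := dist_triangle x ((b ^ m) x) ((b ^ (m + n)) x)
    have h2 : dist ((b ^ m) x) ((b ^ (m + n)) x) = dist x ((b ^ n) x) := by
      rw [pow_add]
      exact (b ^ m).isometry.dist_eq _ _
    linarith
  have hb : BddBelow (Set.range fun n : ℕ => dist x ((b ^ n) x) / n) :=
    ⟨0, by rintro _ ⟨n, rfl⟩; positivity⟩
  have ht := hs.tendsto_lim hb
  refine ⟨x, hs.lim, lt_of_lt_of_le hT ?_, ht⟩
  refine ge_of_tendsto ht ?_
  filter_upwards [Filter.eventually_gt_atTop 0] with n hn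
  rw [le_div_iff₀ (by exact_mod_cast hn)]
  linarith [h n]

lemma disp_le_aux {X : Type*} [MetricSpace X] {S : Finset (X ≃ᵢ X)} {s : X ≃ᵢ X} (hs : s ∈ S)
    (x : X) : dist x (s x) ≤ idispAt S x :=
  le_csSup ((S.finite_toSet.image _).bddAbove) ⟨s, hs, rfl⟩

lemma disp_max_aux {X : Type*} [MetricSpace X] {S : Finset (X ≃ᵢ X)} (hS : S.Nonempty)
    (x : X) : ∃ s ∈ S, dist x (s x) = idispAt S x := by
  have : idispAt S x ∈ ((fun s : X ≃ᵢ X => dist x (s x)) '' (S : Set (X ≃ᵢ X))) :=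
    Set.Nonempty.csSup_mem (Set.Nonempty.image _ (by exact_mod_cast hS))
      (S.finite_toSet.image _)
  obtain ⟨s, h, e⟩ := this
  exact ⟨s, h, e⟩

lemma disp_inf_aux {X : Type*} [MetricSpace X] {S : Finset (X ≃ᵢ X)} (hS : S.Nonempty)
    (x : X) : idispSpace S ≤ idispAt S x := by
  refine csInf_le ⟨0, ?_⟩ ⟨x, rfl⟩
  rintro _ ⟨y, rfl⟩
  obtain ⟨s, _, e⟩ := disp_max_aux hS y
  show 0 ≤ idispAt S y
  rw [← e]; exact dist_nonneg

lemma caseA_aux {X : Type*} [MetricSpace X] {δ : ℝ} (hδ : 0 < δ) (hg : GeodesicMetricSpace X)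
    (hh : DeltaHyperbolic X δ) (s : X ≃ᵢ X) (L : ℝ) (hL : 30 * δ ≤ L)
    (h : ∀ x, L - 18 * δ ≤ dist x (s x)) (x : X) :
    dist x (s x) + L - 22 * δ ≤ dist x (s (s x)) := by
  obtain ⟨m, m1, m2, hm⟩ := star_aux hg hh x (s x) (dist x (s x) / 2)
    (by positivity) (by linarith [dist_nonneg (x := x) (y := s x)])
  have h1 := h m
  have e1 : dist (s.symm m) x = dist m (s x) := by
    rw [← s.isometry.dist_eq (s.symm m) x, s.apply_symm_apply]
  have e2 : dist (s.symm m) (s x) = dist m (s (s x)) := by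
    rw [← s.isometry.dist_eq (s.symm m) (s x), s.apply_symm_apply]
  have e3 : dist (s.symm m) m = dist m (s m) := by
    rw [← s.isometry.dist_eq (s.symm m) m, s.apply_symm_apply]
  have a1 := hm (s.symm m)
  have a2 := hm (s (s x))
  rw [e1, e2, e3] at a1
  rw [s.isometry.dist_eq, dist_comm (s (s x)) m, dist_comm (s (s x)) x, dist_comm (s x) x] at a2
  rcases a1 with a1 | a1 <;> rcases a2 with a2 | a2 <;> linarith

lemma caseB_aux {X : Type*} [MetricSpace X] {δ : ℝ} (hδ : 0 < δ) (hg : GeodesicMetricSpace X)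
    (hh : DeltaHyperbolic X δ) (S : Finset (X ≃ᵢ X)) (hS : S.Nonempty)
    (hL : 30 * δ ≤ idispSpace S)
    (h : ∀ s ∈ S, ∃ y, dist y (s y) < idispSpace S - 18 * δ) (x : X)
    (hx : idispAt S x < idispSpace S + δ) :
    ∃ s ∈ S, ∃ t ∈ S, 2 * dist x (s x) + 8 * δ < dist x (s (t x)) + dist x (t (s x)) ∧
      2 * dist x (t x) + 8 * δ < dist x (s (t x)) + dist x (t (s x)) ∧
      2 * idispSpace S - 37 * δ ≤
        dist x (s (t x)) + dist x (t (s x)) - dist x (s x) - dist x (t x) - 8 * δ := by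
  obtain ⟨t, ht, elt⟩ := disp_max_aux hS x
  have hlt := disp_inf_aux hS x
  obtain ⟨y, hy⟩ := h t ht
  have hD := dist_triangle4 x y (t y) (t x)
  rw [t.isometry.dist_eq, dist_comm y x] at hD
  obtain ⟨p, p1, p2, hp⟩ := star_aux hg hh x y (5 * δ) (by linarith) (by linarith)
  obtain ⟨s, hs, els⟩ := disp_max_aux hS p
  have hps := disp_inf_aux hS p
  have hls := disp_le_aux hs x
  obtain ⟨z, hz⟩ := h s hs
  refine ⟨s, hs, t, ht, ?_⟩
  rw [← els] at hps
  rw [← elt] at hlt hx hls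
  generalize idispSpace S = L at *
  -- inverse points
  have ex : ∀ v, dist (s.symm x) v = dist x (s v) := fun v => by
    rw [← s.isometry.dist_eq (s.symm x) v, s.apply_symm_apply]
  have et : ∀ v, dist (t.symm x) v = dist x (t v) := fun v => by
    rw [← t.isometry.dist_eq (t.symm x) v, t.apply_symm_apply]
  have b0 := dist_triangle4 x p (s p) (s x)
  rw [s.isometry.dist_eq, dist_comm p x] at b0
  have b0' := dist_triangle4 p x (s x) (s p)
  rw [s.isometry.dist_eq, dist_comm p x] at b0'
  have b1 := hp (s x)
  have b2 := hp (s.symm x)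
  rw [ex, ex, ex] at b2
  have b3 := four_aux hg hh p (s x) (s p) x
  have b4 := four_aux hg hh x (s x) z (s.symm x)
  have b5 := four_aux hg hh (s.symm x) (s x) y x
  have b5' := four_aux hg hh (s x) (s.symm x) y x
  have b6 := four_aux hg hh (s.symm x) (t x) y x
  have b7 := four_aux hg hh (s x) (t.symm x) y x
  have z1 := dist_triangle z (s z) (s x)
  have z2 := dist_triangle x z (s z)
  have y1 := dist_triangle y (t y) (t x)
  have y2 := dist_triangle x y (t y)
  rw [s.isometry.dist_eq] at z1
  rw [t.isometry.dist_eq] at y1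
  rw [s.isometry.dist_eq] at b3
  rw [dist_comm (s x) (s.symm x)] at b4 b5'
  rw [dist_comm z (s.symm x), dist_comm x (s.symm x)] at b4
  rw [dist_comm (s x) (t.symm x)] at b7
  simp only [ex, et] at b4 b5 b5' b6 b7
  rw [dist_comm y x] at b5 b5' b6 b7 y1
  rw [dist_comm z x] at z1
  rw [dist_comm (s x) x] at b1 b3 b5 b5' b7
  rw [dist_comm (s p) x] at b3
  rw [dist_comm p x] at b3
  rw [dist_comm (t x) x] at b6
  rw [dist_comm (s x) z] at b4
  rw [dist_comm y (t x)] at y1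
  rw [dist_comm (s x) p] at b1
  have b3' : dist p (s p) + dist x (s x) ≤ dist p (s x) + dist x (s p) + 4 * δ := by
    rcases b3 with b3 | b3 <;> linarith
  have b4' : dist x (s (s x)) ≤ dist x (s x) + L - 14 * δ := by
    rcases b4 with b4 | b4 <;> linarith
  clear b3 b4
  have main : 2 * L - 37 * δ ≤
        dist x (s (t x)) + dist x (t (s x)) - dist x (s x) - dist x (t x) - 8 * δ := by
    rcases b1 with b1 | b1 <;> rcases b2 with b2 | b2 <;> rcases b5 with b5 | b5 <;>
      rcases b5' with b5' | b5' <;> rcases b6 with b6 | b6 <;> rcases b7 with b7 | b7 <;>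
      linarith
  exact ⟨by linarith, by linarith, main⟩

lemma quasi_aux {X : Type*} [MetricSpace X] (b : X ≃ᵢ X) (o : X) (γ : ℝ → X) (T c : ℝ)
    (hγ : IsGeodesicSeg γ o (b o)) (hT : 0 < T)
    (hb : ∀ (y : X) (n : ℕ), n * T ≤ dist y ((b ^ n) y))
    (h1 : dist o (b o) ≤ c * T) (h2 : dist o (b o) * (dist o (b o) - T) ≤ c * T) :
    IsQuasiGeodesicParam c (axisPath b o γ) := by
  have hlT : T ≤ dist o (b o) := by
    have := hb o 1
    simpa using this
  obtain ⟨g0, g1, gd⟩ := hγ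
  set l := dist o (b o) with hl
  have hlpos : 0 < l := lt_of_lt_of_le hT hlT
  have hfl : ∀ t : ℝ, (⌊t / l⌋ : ℝ) * l ≤ t := fun t => by
    have := Int.floor_le (t / l)
    rwa [le_div_iff₀ hlpos] at this
  have hfl2 : ∀ t : ℝ, t < ((⌊t / l⌋ : ℝ) + 1) * l := fun t => by
    have := Int.lt_floor_add_one (t / l)
    rwa [div_lt_iff₀ hlpos] at this
  have hax : ∀ t, axisPath b o γ t = (b ^ ⌊t / l⌋) (γ (t - (⌊t / l⌋ : ℝ) * l)) := fun t => rfl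
  have hpow : ∀ (i : ℤ) (n : ℕ), dist ((b ^ i) o) ((b ^ (i + n)) o) ≤ n * l := fun i n => by
    rw [zpow_add, zpow_natCast]
    have : dist ((b ^ i) o) ((b ^ i * b ^ n) o) = dist o ((b ^ n) o) :=
      (b ^ i).isometry.dist_eq _ _
    rw [this]
    exact pow_dist_le_aux b o n
  have lip0 : ∀ s t, s ≤ t → dist (axisPath b o γ s) (axisPath b o γ t) ≤ t - s := by
    intro s t hst
    have s1 := hfl s
    have s2 := hfl2 s
    have t1 := hfl t
    have t2 := hfl2 t
    have hij : ⌊s / l⌋ ≤ ⌊t / l⌋ := Int.floor_le_floor (by gcongr)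
    rw [hax, hax]
    generalize ⌊s / l⌋ = i at *
    generalize ⌊t / l⌋ = j at *
    rcases hij.eq_or_lt with h | h
    · subst h
      rw [(b ^ i).isometry.dist_eq, gd _ ⟨by linarith, by linarith⟩ _ ⟨by linarith, by linarith⟩]
      rw [abs_sub_comm, abs_of_nonneg (by linarith)]
      linarith
    · obtain ⟨n, hn⟩ := Int.eq_ofNat_of_zero_le (show 0 ≤ j - (i + 1) by omega)
      have hj : j = (i + 1) + n := by omega
      have k1 := hpow (i + 1) n
      rw [← hj] at k1
      have k2 : dist ((b ^ i) (γ (s - i * l))) ((b ^ (i + 1)) o) = (i + 1) * l - s := by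
        have : (b ^ (i + 1)) o = (b ^ i) (γ l) := by rw [g1, zpow_add_one]; rfl
        rw [this, (b ^ i).isometry.dist_eq, gd _ ⟨by linarith, by linarith⟩ _ ⟨by linarith, le_refl _⟩,
          abs_sub_comm, abs_of_nonneg (by linarith)]
        ring
      have k3 : dist ((b ^ j) o) ((b ^ j) (γ (t - j * l))) = t - j * l := by
        have : (b ^ j) o = (b ^ j) (γ 0) := by rw [g0]
        rw [this, (b ^ j).isometry.dist_eq, gd _ ⟨le_refl _, by linarith⟩ _ ⟨by linarith, by linarith⟩,
          abs_sub_comm, abs_of_nonneg (by linarith)]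
        ring
      have k4 := dist_triangle4 ((b ^ i) (γ (s - i * l))) ((b ^ (i + 1)) o) ((b ^ j) o)
        ((b ^ j) (γ (t - j * l)))
      have hj' : (j : ℝ) = i + 1 + n := by rw [hj]; push_cast; ring
      rw [hj'] at k3
      have : (j : ℝ) * l = (i + 1) * l + n * l := by rw [hj']; ring
      rw [← hj'] at k3
      linarith
  have low0 : ∀ s t, s ≤ t → t - s ≤ c * dist (axisPath b o γ s) (axisPath b o γ t) + c := by
    intro s t hst
    have hq : 0 ≤ (t - s) / l := div_nonneg (by linarith) hlpos.le
    have n1 := Nat.le_ceil ((t - s) / l)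
    have n2 := Nat.ceil_lt_add_one hq
    generalize ⌈(t - s) / l⌉₊ = n at n1 n2
    rw [div_le_iff₀ hlpos] at n1
    have n3 : n * l < t - s + l := by
      have : (t - s) / l * l = t - s := div_mul_cancel₀ _ hlpos.ne'
      nlinarith
    have e : axisPath b o γ (s + n * l) = (b ^ n) (axisPath b o γ s) := by
      have : ⌊(s + n * l) / l⌋ = n + ⌊s / l⌋ := by
        rw [add_div, mul_div_assoc, div_self hlpos.ne', mul_one, Int.floor_add_natCast, add_comm]
      rw [hax, hax, this, zpow_add, zpow_natCast]
      push_cast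
      have : s + n * l - (n + (⌊s / l⌋ : ℝ)) * l = s - ⌊s / l⌋ * l := by ring
      rw [this]; rfl
    have k1 := hb (axisPath b o γ s) n
    rw [← e] at k1
    have k2 := lip0 t (s + n * l) (by linarith)
    have k3 := dist_triangle (axisPath b o γ s) (axisPath b o γ t) (axisPath b o γ (s + n * l))
    have hdn := dist_nonneg (x := axisPath b o γ s) (y := axisPath b o γ t)
    generalize dist (axisPath b o γ s) (axisPath b o γ t) = d at *
    have hd : t - s - n * (l - T) ≤ d := by linarith
    have k5 : (t - s) * T ≤ l * d + l * (l - T) := by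
      have a1 : l * (t - s - n * (l - T)) ≤ l * d := by gcongr
      have a2 : (n * l) * (l - T) ≤ (t - s + l) * (l - T) := by
        apply mul_le_mul_of_nonneg_right n3.le; linarith
      nlinarith
    have k6 : l * d ≤ c * T * d := mul_le_mul_of_nonneg_right h1 hdn
    have : (t - s) * T ≤ (c * d + c) * T := by nlinarith
    exact le_of_mul_le_mul_right this hT
  intro s t
  rcases le_total s t with h | h
  · rw [abs_sub_comm, abs_of_nonneg (by linarith)]
    exact ⟨low0 s t h, lip0 s t h⟩
  · rw [abs_of_nonneg (by linarith), dist_comm]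
    exact ⟨low0 t s h, lip0 t s h⟩

/-- Let `X` be `δ`-hyperbolic geodesic and `S` a finite nonempty set of
isometries with `λ(S, X) ≥ 30δ`. Then `S^{≤2} = S ∪ S·S` contains a loxodromic isometry
`b` such that, for a constant `c₀ > 0` depending only on `δ`, for every `o ∈ X` with
`|λ(S,o) − λ(S,X)| < δ` one has `d(o, b·o) ≥ λ(S,X) − 10δ` and the bi-infinite
concatenation `α = ⋃_{n∈ℤ} bⁿ[o, b·o]` of translates of a geodesic `[o, b·o]` is a
`c₀`-quasi-geodesic (a quasi-axis for `b`). -/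
theorem statement6 (δ : ℝ) (hδ : 0 < δ) :
    ∃ c₀ : ℝ, 0 < c₀ ∧
      ∀ (X : Type*) [MetricSpace X], GeodesicMetricSpace X → DeltaHyperbolic X δ →
        ∀ S : Finset (X ≃ᵢ X), S.Nonempty → 30 * δ ≤ idispSpace S →
          ∃ b : X ≃ᵢ X, (b ∈ S ∨ ∃ s ∈ S, ∃ t ∈ S, b = s * t) ∧ Loxodromic b ∧
            ∀ o : X, |idispAt S o - idispSpace S| < δ →
              idispSpace S - 10 * δ ≤ dist o (b o) ∧
              ∃ γ : ℝ → X, IsGeodesicSeg γ o (b o) ∧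
                IsQuasiGeodesicParam c₀ (axisPath b o γ) := by
  refine ⟨8 + 432 * δ, by positivity, ?_⟩
  intro X _ hg hh S hS hL
  have hne : Nonempty X := by
    by_contra hn
    rw [not_nonempty_iff] at hn
    have : idispSpace S = 0 := by
      unfold idispSpace
      rw [Set.range_eq_empty, Real.sInf_empty]
    linarith
  obtain ⟨b, hmem, T, hT, hTb, hfar⟩ : ∃ b : X ≃ᵢ X, (∃ s ∈ S, ∃ t ∈ S, b = s * t) ∧
      ∃ T : ℝ, 2 * idispSpace S - 52 * δ ≤ T ∧
        (∀ (y : X) (n : ℕ), n * T ≤ dist y ((b ^ n) y)) ∧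
        ∀ y : X, idispSpace S - 10 * δ ≤ dist y (b y) := by
    by_cases hc : ∃ s ∈ S, ∀ y, idispSpace S - 18 * δ ≤ dist y (s y)
    · obtain ⟨s, hs, h⟩ := hc
      have hA := caseA_aux hδ hg hh s _ hL h
      obtain ⟨x⟩ := hne
      refine ⟨s * s, ⟨s, hs, s, hs, rfl⟩, _, ?_, fun y n => tau_aux (s * s) x _
        (chain_aux hg hh s s x _ _ _ _ rfl rfl rfl rfl ?_ ?_ hδ) y n, fun y => ?_⟩
      · linarith [hA x]
      · linarith [hA x]
      · linarith [hA x]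
      · show _ ≤ dist y (s (s y))
        linarith [hA y, h y]
    · push Not at hc
      obtain ⟨_, ⟨x, rfl⟩, hx⟩ := exists_lt_of_csInf_lt
        (Set.range_nonempty fun x : X => idispAt S x)
        (show idispSpace S < idispSpace S + δ by linarith)
      obtain ⟨s, hs, t, ht, c1, c2, c3⟩ := caseB_aux hδ hg hh S hS hL hc x hx
      have hb := fun y n => tau_aux (s * t) x _
        (chain_aux hg hh s t x _ _ _ _ rfl rfl rfl rfl c1 c2 hδ) y n
      refine ⟨s * t, ⟨s, hs, t, ht, rfl⟩, _, by linarith, hb, fun y => ?_⟩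
      have := hb y 1
      rw [pow_one, Nat.cast_one, one_mul] at this
      linarith
  have hT0 : 8 * δ ≤ T := by linarith
  refine ⟨b, Or.inr hmem, ?_, fun o ho => ⟨hfar o, ?_⟩⟩
  · obtain ⟨x⟩ := hne
    exact lox_aux b x T (by linarith) (hTb x)
  · obtain ⟨γ, hγ⟩ := hg o (b o)
    refine ⟨γ, hγ, ?_⟩
    have hl : dist o (b o) ≤ T + 54 * δ := by
      obtain ⟨s, hs, t, ht, rfl⟩ := hmem
      have h1 := dist_triangle o (s o) (s (t o))
      rw [s.isometry.dist_eq] at h1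
      have h2 := disp_le_aux hs o
      have h3 := disp_le_aux ht o
      have h4 := (abs_lt.1 ho).2
      show dist o (s (t o)) ≤ _
      linarith
    have hlT : T ≤ dist o (b o) := by
      have := hTb o 1
      simpa using this
    have h8 : dist o (b o) ≤ 8 * T := by linarith
    refine quasi_aux b o γ T _ hγ (by linarith) hTb (by nlinarith) ?_
    have : dist o (b o) * (dist o (b o) - T) ≤ (8 * T) * (54 * δ) :=
      mul_le_mul h8 (by linarith) (by linarith) (by linarith)
    nlinarith
end

section
/- Let G be a group generated as a semigroup by a finite set U, and let H be a subgroup of G of index d. Then there exists a finite subset W ⊆ U^{≤ (d!)²−d!+1} such that W generates H as a group and |W| ≥ |U|/d!. -/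
open Pointwise

/-- `U` generates the group `G` as a semigroup: every element of `G` is a product of
elements of `U` (no inverses allowed). -/
def SemigroupGenerates {G : Type*} [Group G] (U : Set G) : Prop :=
  ∀ g : G, ∃ n : ℕ, g ∈ U ^ n

/-- `U^{≤m} = ⋃_{i ≤ m} Uⁱ`: products of at most `m` elements of `U`. -/
def wordBall {G : Type*} [Group G] (U : Set G) (m : ℕ) : Set G :=
  {g : G | ∃ i ≤ m, g ∈ U ^ i}

theorem wordBall_mono_aux {G : Type*} [Group G] {U : Set G} {m n : ℕ} (h : m ≤ n) :
    wordBall U m ⊆ wordBall U n := by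
  rintro g ⟨i, hi, hg⟩
  exact ⟨i, hi.trans h, hg⟩

theorem wordBall_mul_aux {G : Type*} [Group G] {U : Set G} {m n : ℕ} {a b : G}
    (ha : a ∈ wordBall U m) (hb : b ∈ wordBall U n) : a * b ∈ wordBall U (m + n) := by
  obtain ⟨i, hi, ha⟩ := ha
  obtain ⟨j, hj, hb⟩ := hb
  exact ⟨i + j, by omega, by rw [pow_add]; exact Set.mul_mem_mul ha hb⟩

theorem wordBall_one_aux {G : Type*} [Group G] {U : Set G} {a : G}
    (ha : a ∈ U) : a ∈ wordBall U 1 := ⟨1, le_rfl, by simpa using ha⟩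

theorem wordBall_finite_aux {G : Type*} [Group G] (U : Finset G) (m : ℕ) :
    (wordBall (U : Set G) m).Finite := by
  have : wordBall (U : Set G) m = ⋃ i ∈ Set.Iic m, (U : Set G) ^ i := by
    ext g; simp [wordBall]
  rw [this]
  refine (Set.finite_Iic m).biUnion fun i _ => ?_
  induction i with
  | zero => simp
  | succ i ih => rw [pow_succ]; exact Set.Finite.mul (ih (by simp_all; omega)) U.finite_toSet

theorem reach_aux {G : Type*} [Group G] {U : Set G} (hU : SemigroupGenerates U)
    {X : Type*} [MulAction G X] [MulAction.IsPretransitive G X] [Finite X] (x y : X) :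
    ∃ s ∈ wordBall U (Nat.card X - 1), s • x = y := by
  let S : ℕ → Set X := fun k => (fun s : G => s • x) '' wordBall U k
  have hx : ∀ k, x ∈ S k := fun k => ⟨1, ⟨0, by omega, by simp⟩, one_smul _ _⟩
  have hstep : ∀ k, ∀ u ∈ U, ∀ z ∈ S k, u • z ∈ S (k + 1) := by
    rintro k u hu _ ⟨s, hs, rfl⟩
    refine ⟨u * s, ?_, mul_smul _ _ _⟩
    rw [add_comm]
    exact wordBall_mul_aux (wordBall_one_aux hu) hs
  have hmono : ∀ k, S k ⊆ S (k + 1) := fun k =>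
    Set.image_mono (wordBall_mono_aux (Nat.le_succ k))
  have huniv : ∀ k, S (k + 1) = S k → S k = Set.univ := by
    intro k hk
    have hn : ∀ n : ℕ, ∀ g ∈ U ^ n, g • x ∈ S k := by
      intro n
      induction n with
      | zero => intro g hg; simp at hg; subst hg; simpa using hx k
      | succ n ih =>
        intro g hg
        rw [pow_succ'] at hg
        obtain ⟨u, hu, g', hg', rfl⟩ := hg
        show (u * g') • x ∈ S k
        rw [mul_smul, ← hk]
        exact hstep k u hu _ (ih g' hg')
    ext z
    obtain ⟨g, rfl⟩ := MulAction.exists_smul_eq G x z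
    obtain ⟨n, hg⟩ := hU g
    simpa using hn n g hg
  have hcard : ∀ k, S k = Set.univ ∨ k + 1 ≤ (S k).ncard := by
    intro k
    induction k with
    | zero =>
      right
      have : 0 < (S 0).ncard := (Set.ncard_pos).2 ⟨x, hx 0⟩
      omega
    | succ k ih =>
      rcases ih with h | h
      · left; exact Set.eq_univ_of_univ_subset (h ▸ hmono k)
      · by_cases he : S (k + 1) = S k
        · left; rw [he]; exact huniv k he
        · right
          have := Set.ncard_lt_ncard ((hmono k).ssubset_of_ne (Ne.symm he))
          omega
  have hfin : S (Nat.card X - 1) = Set.univ := by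
    rcases hcard (Nat.card X - 1) with h | h
    · exact h
    · apply Set.eq_of_subset_of_ncard_le (Set.subset_univ _)
      rw [Set.ncard_univ]; omega
  have hy : y ∈ S (Nat.card X - 1) := hfin ▸ Set.mem_univ y
  obtain ⟨s, hs, h⟩ := hy
  exact ⟨s, hs, h⟩

/-- Let `G` be a group generated as a semigroup by a finite set `U`, and
let `H` be a subgroup of index `d` in `G`. Then there is a finite
`W ⊆ U^{≤ (d!)²−d!+1}` generating `H` as a group with `|W| ≥ |U|/d!`. -/
theorem statement13 {G : Type*} [Group G] (U : Finset G)
    (hU : SemigroupGenerates (U : Set G)) (H : Subgroup G)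
    (d : ℕ) (hd : 0 < d) (hidx : H.index = d) :
    ∃ W : Finset G,
      (W : Set G) ⊆ wordBall (U : Set G) (d.factorial ^ 2 - d.factorial + 1) ∧
      Subgroup.closure (W : Set G) = H ∧
      (U.card : ℝ) / (d.factorial : ℝ) ≤ (W.card : ℝ) := by
  classical
  haveI : H.FiniteIndex := ⟨by omega⟩
  have hX : Nat.card (G ⧸ H) = d := hidx
  have hM : 2 * d - 1 ≤ d.factorial ^ 2 - d.factorial + 1 := by
    have h1 : d ≤ d.factorial := Nat.self_le_factorial d
    obtain ⟨e, he⟩ : ∃ e, d.factorial = e + 1 := ⟨d.factorial - 1, by omega⟩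
    have h2 : d.factorial ^ 2 - d.factorial = (e + 1) * e := by
      rw [he]; apply Nat.sub_eq_of_eq_add; ring
    rw [h2]
    have h3 : 2 * e ≤ (e + 1) * e := by
      rcases Nat.eq_zero_or_pos e with h | h
      · simp [h]
      · exact Nat.mul_le_mul_right _ (by omega)
    omega
  have hreach : ∀ x y : G ⧸ H, ∃ s ∈ wordBall (U : Set G) (d - 1), s • x = y := by
    intro x y
    have := reach_aux hU x y
    rwa [hX] at this
  let o : G ⧸ H := ((1 : G) : G ⧸ H)
  have ho : ∀ g : G, g • o = (g : G ⧸ H) := fun g => by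
    show ((g * 1 : G) : G ⧸ H) = g
    rw [mul_one]
  have hoH : ∀ g : G, g • o = o ↔ g ∈ H := fun g => by
    rw [ho]
    show (g : G ⧸ H) = ((1 : G) : G ⧸ H) ↔ _
    rw [eq_comm, QuotientGroup.eq]; simp
  choose t ht hto using fun q => hreach o q
  choose s hs hso using fun q => hreach q o
  set M := d.factorial ^ 2 - d.factorial + 1 with hMdef
  have hfin : (wordBall (U : Set G) M ∩ H).Finite :=
    (wordBall_finite_aux U M).inter_of_left _
  have hW : ∀ g : G, g ∈ hfin.toFinset ↔ g ∈ wordBall (U : Set G) M ∧ g ∈ H := by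
    intro g; simp
  refine ⟨hfin.toFinset, ?_, ?_, ?_⟩
  · intro g hg
    exact ((hW g).1 hg).1
  · apply le_antisymm
    · rw [Subgroup.closure_le]
      intro g hg
      exact ((hW g).1 hg).2
    · set K := Subgroup.closure (hfin.toFinset : Set G) with hK
      have hmem : ∀ g, ∀ k ≤ 2 * d - 1, g ∈ wordBall (U : Set G) k → g • o = o → g ∈ K := by
        intro g k hk hg hgo
        apply Subgroup.subset_closure
        exact (hW g).2 ⟨wordBall_mono_aux (hk.trans hM) hg, (hoH g).1 hgo⟩
      have key : ∀ n : ℕ, ∀ g ∈ (U : Set G) ^ n, s (g • o) * g ∈ K := by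
        intro n
        induction n with
        | zero =>
          intro g hg
          simp at hg
          subst hg
          refine hmem _ (d - 1) (by omega) (by simpa using hs _) ?_
          rw [mul_smul, hso]
        | succ n ih =>
          intro g hg
          rw [pow_succ'] at hg
          obtain ⟨u, hu, g', hg', rfl⟩ := hg
          show s ((u * g') • o) * (u * g') ∈ K
          have h1 : s ((u * g') • o) * u * t (g' • o) ∈ K := by
            refine hmem _ ((d - 1) + 1 + (d - 1)) (by omega)
              (wordBall_mul_aux (wordBall_mul_aux (hs _) (wordBall_one_aux hu)) (ht _)) ?_
            rw [mul_smul, hto, mul_smul, ← mul_smul u, hso]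
          have h2 : s (g' • o) * t (g' • o) ∈ K := by
            refine hmem _ ((d - 1) + (d - 1)) (by omega) (wordBall_mul_aux (hs _) (ht _)) ?_
            rw [mul_smul, hto, hso]
          have h3 := K.mul_mem (K.mul_mem h1 (K.inv_mem h2)) (ih g' hg')
          convert h3 using 1
          group
      intro h hh
      obtain ⟨n, hn⟩ := hU h
      have h1 := key n h hn
      rw [(hoH h).2 hh] at h1
      have h2 : s o ∈ K := hmem _ (d - 1) (by omega) (hs _) (hso _)
      exact (K.mul_mem_cancel_left h2).1 h1
  · haveI : Fintype (G ⧸ H) := Fintype.ofFinite _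
    have hc : U.card ≤ hfin.toFinset.card * (U.image (fun u => u • o)).card := by
      apply Finset.card_le_mul_card_image
      intro q _
      apply Finset.card_le_card_of_injOn (fun u => s q * u)
      · intro u hu
        simp only [Finset.coe_filter, Set.mem_setOf_eq] at hu
        refine (hW _).2 ⟨?_, ?_⟩
        · exact wordBall_mono_aux (by omega) (wordBall_mul_aux (hs q) (wordBall_one_aux hu.1))
        · rw [← hoH, mul_smul, hu.2, hso]
      · intro a _ b _ hab
        exact mul_left_cancel hab
    have hc2 : (U.image (fun u => u • o)).card ≤ d.factorial := by
      refine (Finset.card_le_univ _).trans ?_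
      rw [← Nat.card_eq_fintype_card, hX]
      exact Nat.self_le_factorial d
    rw [div_le_iff₀ (by exact_mod_cast d.factorial_pos)]
    exact_mod_cast hc.trans (Nat.mul_le_mul_left _ hc2)
end

section
/- Let H be a subgroup of a group G with finite index d ≥ 2. Suppose there exist α, β > 0 such that for every finite set W generating H as a group one has |Wⁿ| ≥ (α|W|)^{βn} for all n ∈ ℕ with n ≥ 1. Then, with r = r(d) = (d!)² − d! + 1, for every finite (possibly non-symmetric) set U generating G as a semigroup one has |Uⁿ| ≥ ((α/(d!·2^{r/β}))·|U|)^{(β/r)·n} for every n ∈ ℕ with n ≥ 1. -/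
open Pointwise

theorem wb_mul {G : Type*} [Group G] {U : Set G} {a b : ℕ} {x y : G}
    (hx : x ∈ wordBall U a) (hy : y ∈ wordBall U b) : x * y ∈ wordBall U (a + b) := by
  obtain ⟨i, hi, hx⟩ := hx
  obtain ⟨j, hj, hy⟩ := hy
  refine ⟨i + j, by omega, ?_⟩
  rw [pow_add]
  exact Set.mul_mem_mul hx hy

theorem wb_mono {G : Type*} [Group G] {U : Set G} {a b : ℕ} (h : a ≤ b) :
    wordBall U a ⊆ wordBall U b := fun _ ⟨i, hi, hx⟩ => ⟨i, hi.trans h, hx⟩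

theorem wb_one {G : Type*} [Group G] {U : Set G} {a : ℕ} : (1 : G) ∈ wordBall U a :=
  ⟨0, by omega, by simp⟩

theorem wb_mem {G : Type*} [Group G] {U : Set G} {x : G} (h : x ∈ U) : x ∈ wordBall U 1 :=
  ⟨1, le_rfl, by simpa using h⟩

theorem wb_pow {G : Type*} [Group G] {U W : Set G} {r : ℕ} (h : W ⊆ wordBall U r) (n : ℕ) :
    W ^ n ⊆ wordBall U (r * n) := by
  induction n with
  | zero => intro x hx; simp at hx; subst hx; exact wb_one
  | succ n ih =>
    rw [pow_succ, mul_add, mul_one]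
    rintro _ ⟨x, hx, y, hy, rfl⟩
    exact wb_mul (ih hx) (h hy)

theorem reach_card {G X : Type*} [Group G] [MulAction G X] [Finite X]
    [MulAction.IsPretransitive G X] {U : Set G} (hU : SemigroupGenerates U) (x : X) (k : ℕ)
    (hk : k < Nat.card X) : k + 1 ≤ ((fun g : G => g • x) '' wordBall U k).ncard := by
  induction k with
  | zero =>
    have : ((fun g : G => g • x) '' wordBall U 0).Nonempty := ⟨_, 1, wb_one, rfl⟩
    have := (Set.ncard_pos (Set.toFinite _)).2 this
    omega
  | succ k ih =>
    have ih := ih (by omega)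
    have hsub : (fun g : G => g • x) '' wordBall U k ⊆ (fun g : G => g • x) '' wordBall U (k+1) :=
      Set.image_mono (wb_mono (by omega))
    by_cases he : (fun g : G => g • x) '' wordBall U (k+1) ⊆ (fun g : G => g • x) '' wordBall U k
    · have key : ∀ j : ℕ, ∀ g ∈ U ^ j, g • x ∈ (fun g : G => g • x) '' wordBall U k := by
        intro j
        induction j with
        | zero => intro g hg; simp at hg; subst hg; exact ⟨1, wb_one, rfl⟩
        | succ j ihj =>
          intro g hg
          rw [pow_succ'] at hg
          obtain ⟨u, hu, g, hg, rfl⟩ := hg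
          obtain ⟨t, ht, hh⟩ := ihj g hg
          apply he
          refine ⟨u * t, ?_, ?_⟩
          · rw [add_comm]; exact wb_mul (wb_mem hu) ht
          · simp only [mul_smul] at hh ⊢
            rw [hh]
      have huniv : (fun g : G => g • x) '' wordBall U k = Set.univ := by
        ext y
        simp only [Set.mem_univ, iff_true]
        obtain ⟨g, rfl⟩ := MulAction.exists_smul_eq G x y
        obtain ⟨j, hj⟩ := hU g
        exact key j g hj
      have := Set.ncard_le_ncard hsub (Set.toFinite _)
      rw [huniv, Set.ncard_univ] at this
      omega
    · have := Set.ncard_lt_ncard (lt_of_le_not_ge hsub he) (Set.toFinite _)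
      omega

theorem reach {G X : Type*} [Group G] [MulAction G X] [Finite X]
    [MulAction.IsPretransitive G X] {U : Set G} (hU : SemigroupGenerates U) (x y : X) :
    ∃ s ∈ wordBall U (Nat.card X - 1), s • x = y := by
  have : Nonempty X := ⟨x⟩
  have hp : 0 < Nat.card X := Nat.card_pos
  have h := reach_card hU x (Nat.card X - 1) (by omega)
  have h2 : (fun g : G => g • x) '' wordBall U (Nat.card X - 1) = Set.univ := by
    apply Set.eq_of_subset_of_ncard_le (Set.subset_univ _) _ (Set.toFinite _)
    rw [Set.ncard_univ]; omega
  have h3 : y ∈ (fun g : G => g • x) '' wordBall U (Nat.card X - 1) := by rw [h2]; trivial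
  exact h3

theorem closure_eq {G : Type*} [Group G] (H : Subgroup G) (d r : ℕ) (hd : 2 ≤ d)
    (hidx : H.index = d) (hr : 2 * d - 1 ≤ r) {U : Set G} (hU : SemigroupGenerates U) :
    Subgroup.closure ((H : Set G) ∩ wordBall U r) = H := by
  have hfin : H.FiniteIndex := ⟨by omega⟩
  have hc : Nat.card (G ⧸ H) = d := hidx
  apply le_antisymm
  · rw [Subgroup.closure_le]; exact Set.inter_subset_left
  have key : ∀ k : ℕ, ∀ g ∈ U ^ k, ∃ t ∈ wordBall U (d - 1),
      ∃ w ∈ Subgroup.closure ((H : Set G) ∩ wordBall U r), g = t * w := by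
    intro k
    induction k with
    | zero => intro g hg; simp at hg; subst hg; exact ⟨1, wb_one, 1, one_mem _, by simp⟩
    | succ k ih =>
      intro g hg
      rw [pow_succ'] at hg
      obtain ⟨u, hu, g, hg, rfl⟩ := hg
      obtain ⟨t, ht, w, hw, rfl⟩ := ih g hg
      obtain ⟨t', ht', h1⟩ := reach hU ((1 : G) : G ⧸ H) ((u * t : G) : G ⧸ H)
      obtain ⟨s, hs, h2⟩ := reach hU ((u * t : G) : G ⧸ H) ((1 : G) : G ⧸ H)
      rw [hc] at ht' hs
      have h3 : s * (u * t) ∈ H := by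
        rw [MulAction.Quotient.smul_coe, QuotientGroup.eq] at h2
        simpa using H.inv_mem h2
      have h4 : s * t' ∈ H := by
        rw [← h1, ← mul_smul, MulAction.Quotient.smul_coe, QuotientGroup.eq] at h2
        simpa using H.inv_mem h2
      have m3 : s * (u * t) ∈ Subgroup.closure ((H : Set G) ∩ wordBall U r) :=
        Subgroup.subset_closure ⟨h3, wb_mono (by omega) (wb_mul hs (wb_mul (wb_mem hu) ht))⟩
      have m4 : s * t' ∈ Subgroup.closure ((H : Set G) ∩ wordBall U r) :=
        Subgroup.subset_closure ⟨h4, wb_mono (by omega) (wb_mul hs ht')⟩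
      refine ⟨t', ht', (s * t')⁻¹ * (s * (u * t)) * w,
        mul_mem (mul_mem (inv_mem m4) m3) hw, ?_⟩
      group
  intro g hg
  obtain ⟨k, hk⟩ := hU g
  obtain ⟨t, ht, w, hw, rfl⟩ := key k g hk
  have hwH : w ∈ H := (Subgroup.closure_le H).2 Set.inter_subset_left hw
  have htH : t ∈ H := (Subgroup.mul_mem_cancel_right H hwH).1 hg
  exact mul_mem (Subgroup.subset_closure ⟨htH, wb_mono (by omega) ht⟩) hw

theorem count_W {G : Type*} [Group G] (H : Subgroup G) (d r : ℕ) (hd : 2 ≤ d)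
    (hidx : H.index = d) (hr : 2 * d - 1 ≤ r) (U W : Finset G)
    (hU : SemigroupGenerates (U : Set G))
    (hW : (W : Set G) = (H : Set G) ∩ wordBall (U : Set G) r) : U.card ≤ d * W.card := by
  classical
  have hfin : H.FiniteIndex := ⟨by omega⟩
  have hc : Nat.card (G ⧸ H) = d := hidx
  have hs := fun x : G ⧸ H => reach hU x ((1 : G) : G ⧸ H)
  rw [hc] at hs
  choose s hs hs1 using hs
  let _ : Fintype (G ⧸ H) := Fintype.ofFinite _
  have : U.card ≤ ((Finset.univ : Finset (G ⧸ H)) ×ˢ W).card := by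
    apply Finset.card_le_card_of_injOn (fun u : G => ((u : G ⧸ H), s (u : G ⧸ H) * u))
    · intro u hu
      have : s (u : G ⧸ H) * u ∈ (W : Set G) := by
        rw [hW]
        refine ⟨?_, wb_mono (by omega) (wb_mul (hs _) (wb_mem hu))⟩
        have h2 := hs1 (u : G ⧸ H)
        rw [MulAction.Quotient.smul_coe, QuotientGroup.eq] at h2
        simpa using H.inv_mem h2
      simpa using this
    · intro u _ v _ h
      simp only [Prod.mk.injEq] at h
      obtain ⟨h1, h2⟩ := h
      rw [h1] at h2
      exact mul_left_cancel h2
  rwa [Finset.card_product, Finset.card_univ, ← Nat.card_eq_fintype_card, hc] at this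

open Classical in
theorem wb_coe {G : Type*} [Group G] (U : Finset G) (m : ℕ) :
    wordBall (U : Set G) m = (((Finset.range (m + 1)).biUnion fun i => U ^ i : Finset G) : Set G) := by
  ext x
  simp only [wordBall, Set.mem_ofPred_eq, Finset.coe_biUnion, Set.mem_iUnion, Finset.coe_pow,
    Finset.coe_range, Set.mem_Iio, Nat.lt_succ_iff, exists_prop]

theorem wb_ncard {G : Type*} [Group G] (U : Finset G) (hne : U.Nonempty) (m : ℕ) :
    (wordBall (U : Set G) m).ncard ≤ (m + 1) * ((U : Set G) ^ m).ncard := by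
  classical
  rw [wb_coe, Set.ncard_coe_finset, ← Finset.coe_pow, Set.ncard_coe_finset]
  have hm : Monotone fun i => (U ^ i).card := by
    apply monotone_nat_of_le_succ
    intro i
    rw [pow_succ]
    exact Finset.card_le_card_mul_right hne
  have := Finset.card_biUnion_le_card_mul (Finset.range (m + 1)) (fun i => U ^ i) (U ^ m).card
    (fun i hi => hm (by simp at hi; omega))
  simpa using this

theorem pow_ncard {G : Type*} [Group G] (U : Finset G) (n r : ℕ) :
    ((U : Set G) ^ (r * n)).ncard ≤ (((U : Set G) ^ n).ncard) ^ r := by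
  classical
  rw [← Finset.coe_pow, ← Finset.coe_pow, Set.ncard_coe_finset, Set.ncard_coe_finset, mul_comm,
    pow_mul]
  exact Finset.card_pow_le

theorem final_real (α β F u w x : ℝ) (hα : 0 < α) (hβ : 0 < β) (hF : 0 < F) (hu : 0 ≤ u)
    (hx : 0 ≤ x) (r n : ℕ) (hr : 1 ≤ r) (huw : u ≤ F * w)
    (h : (α * w) ^ (β * (n : ℝ)) ≤ (2 : ℝ) ^ (r * n) * x ^ r) :
    ((α / (F * (2 : ℝ) ^ ((r : ℝ) / β))) * u) ^ ((β / (r : ℝ)) * (n : ℝ)) ≤ x := by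
  have hrpos : (0 : ℝ) < r := by exact_mod_cast hr
  have hA : α * u / F ≤ α * w := by
    rw [div_le_iff₀ hF]
    nlinarith
  have hA0 : 0 ≤ α * u / F := by positivity
  have h3 : (α * u / F) ^ (β * (n : ℝ)) ≤ (2 : ℝ) ^ (r * n) * x ^ r :=
    (Real.rpow_le_rpow hA0 hA (by positivity)).trans h
  have hB : α / (F * (2 : ℝ) ^ ((r : ℝ) / β)) * u = (α * u / F) / (2 : ℝ) ^ ((r : ℝ) / β) := by
    field_simp
  have h4 : ((α * u / F) / (2 : ℝ) ^ ((r : ℝ) / β)) ^ (β * (n : ℝ)) ≤ x ^ r := by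
    rw [Real.div_rpow hA0 (by positivity), ← Real.rpow_mul (by norm_num),
      show (r : ℝ) / β * (β * n) = ((r * n : ℕ) : ℝ) by push_cast; field_simp,
      Real.rpow_natCast, div_le_iff₀ (by positivity)]
    linarith [h3]
  rw [hB, show β / (r : ℝ) * n = (β * n) * (r : ℝ)⁻¹ by field_simp,
    Real.rpow_mul (by positivity)]
  calc _ ≤ (x ^ r) ^ ((r : ℝ)⁻¹) := Real.rpow_le_rpow (by positivity) h4 (by positivity)
    _ = x := Real.pow_rpow_inv_natCast hx (by omega)

/-- Let `H ≤ G` have finite index `d ≥ 2`, and suppose `α, β > 0` are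
such that every finite set `W` generating `H` as a group satisfies
`|Wⁿ| ≥ (α|W|)^{βn}` for all `n ≥ 1`. Then, with `r = (d!)² − d! + 1`, every finite
(possibly non-symmetric) set `U` generating `G` as a semigroup satisfies
`|Uⁿ| ≥ ((α/(d!·2^{r/β}))·|U|)^{(β/r)·n}` for all `n ≥ 1`. -/
theorem statement14 {G : Type*} [Group G] (H : Subgroup G) (d : ℕ) (hd : 2 ≤ d)
    (hidx : H.index = d) (α β : ℝ) (hα : 0 < α) (hβ : 0 < β)
    (hH : ∀ W : Finset G, Subgroup.closure (W : Set G) = H →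
      ∀ n : ℕ, 1 ≤ n →
        (α * (W.card : ℝ)) ^ (β * (n : ℝ)) ≤ (((W : Set G) ^ n).ncard : ℝ)) :
    ∀ r : ℕ, r = d.factorial ^ 2 - d.factorial + 1 →
      ∀ U : Finset G, SemigroupGenerates (U : Set G) →
        ∀ n : ℕ, 1 ≤ n →
          ((α / ((d.factorial : ℝ) * (2 : ℝ) ^ ((r : ℝ) / β))) * (U.card : ℝ))
              ^ ((β / (r : ℝ)) * (n : ℝ))
            ≤ (((U : Set G) ^ n).ncard : ℝ) := by
  intro r hr U hU n hn
  classical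
  have hfd : d ≤ d.factorial := Nat.self_le_factorial d
  have hr2 : 2 * d - 1 ≤ r := by
    have h1 : d * d - d ≤ d.factorial ^ 2 - d.factorial := by
      have e : ∀ a : ℕ, a * a - a = a * (a - 1) := fun a => by
        rw [Nat.mul_sub, mul_one]
      rw [sq, e, e]
      exact Nat.mul_le_mul hfd (by omega)
    have h2 : 2 * d ≤ d * d := Nat.mul_le_mul_right d hd
    obtain ⟨e, rfl⟩ : ∃ e, d = e + 2 := ⟨d - 2, by omega⟩
    have h3 : (e + 2) * (e + 2) - (e + 2) = e * e + 3 * e + 2 := by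
      have : (e + 2) * (e + 2) = e * e + 3 * e + 2 + (e + 2) := by ring
      omega
    have : 0 ≤ e * e := by positivity
    omega
  clear hr
  have hr1 : 1 ≤ r := by omega
  have hne : U.Nonempty := by
    rw [Finset.nonempty_iff_ne_empty]
    rintro rfl
    have : ∀ g : G, g = 1 := by
      intro g
      obtain ⟨k, hk⟩ := hU g
      rcases k with _ | k
      · simpa using hk
      · simp [pow_succ] at hk
    have : H = ⊤ := by
      ext g; rw [this g]; simp [H.one_mem]
    rw [this, Subgroup.index_top] at hidx
    omega
  have hballfin : (wordBall (U : Set G) r).Finite := by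
    rw [wb_coe]; exact Finset.finite_toSet _
  have hWfin : ((H : Set G) ∩ wordBall (U : Set G) r).Finite := hballfin.inter_of_right _
  obtain ⟨W, hW⟩ : ∃ W : Finset G, (W : Set G) = (H : Set G) ∩ wordBall (U : Set G) r :=
    ⟨hWfin.toFinset, by simp⟩
  have hcl : Subgroup.closure (W : Set G) = H := by
    rw [hW]; exact closure_eq H d r hd hidx hr2 hU
  have h1 := hH W hcl n hn
  have hcard := count_W H d r hd hidx hr2 U W hU hW
  have h2 : ((W : Set G) ^ n).ncard ≤ 2 ^ (r * n) * (((U : Set G) ^ n).ncard) ^ r := by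
    calc ((W : Set G) ^ n).ncard ≤ (wordBall (U : Set G) (r * n)).ncard := by
          refine Set.ncard_le_ncard (wb_pow (by rw [hW]; exact Set.inter_subset_right) n) ?_
          rw [wb_coe]; exact Finset.finite_toSet _
      _ ≤ (r * n + 1) * ((U : Set G) ^ (r * n)).ncard := wb_ncard U hne _
      _ ≤ _ := Nat.mul_le_mul (Nat.lt_two_pow_self) (pow_ncard U n r)
  have hcard2 : (U.card : ℝ) ≤ (d.factorial : ℝ) * (W.card : ℝ) := by
    exact_mod_cast hcard.trans (Nat.mul_le_mul_right _ hfd)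
  have hfpos : (0 : ℝ) < (d.factorial : ℝ) := by exact_mod_cast d.factorial_pos
  exact final_real α β _ _ _ _ hα hβ hfpos (Nat.cast_nonneg _) (Nat.cast_nonneg _) r n hr1 hcard2
    (h1.trans (by exact_mod_cast h2))
end
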